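/- Let w be a positive even integer and let n be an odd integer with 0 < n < w. Then E_{w,n} is an even weighted Dedekind symbol of weight w: E_{w,n}(h,k+h)=E_{w,n}(h,k) and E_{w,n}(ch,ck)=c^w·E_{w,n}(h,k) for all (h,k) ∈ ℤ⁺×ℤ and c ∈ ℤ⁺, and E_{w,n}(h,−k)=E_{w,n}(h,k) for all (h,k) ∈ ℤ⁺×ℤ. Moreover E_{w,n} satisfies the reciprocity law E_{w,n}(h,k) − E_{w,n}(k,−h) = S_{w,n}(h,k) for all h,k ∈ ℤ⁺. -/

import Mathlib

open scoped Classical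

/-- The `m`-th Bernoulli function `B̄_m(x) = B_m(x − ⌊x⌋)` (ℂ-valued, rational argument). -/
noncomputable def Bbar (m : ℕ) (x : ℚ) : ℂ :=
  ((Polynomial.bernoulli m).eval (x - ⌊x⌋) : ℚ)

/-- The `m`-th Bernoulli polynomial evaluated at a complex number. -/
noncomputable def Bpoly (m : ℕ) (x : ℂ) : ℂ :=
  Polynomial.aeval x (Polynomial.bernoulli m)

/-- The `m`-th Bernoulli number `B_m = B_m(0)`. -/
noncomputable def Bnum (m : ℕ) : ℂ := ((bernoulli m : ℚ) : ℂ)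

/-- The finite sum `I_{w,n}(h,k) = (1/2)·∑ sgn(k/h+b/a)·(ak+bh)^{w-n}·(ck+dh)^n`,
over quadruples `(a,b,c,d) ∈ ℤ⁴` with `ad−bc = 1`, `a ≠ 0`, `c ≠ 0`,
`|b+⌊k/h+1/2⌋a| ≤ |a| ≤ h`, `|d+⌊k/h+1/2⌋c| ≤ |c| ≤ h` and `(k/h+b/a)(k/h+d/c) < 0`;
the factor `1/2` accounts for the quotient of `SL(2,ℤ)` by `±1`. -/
noncomputable def Iwn (w n : ℕ) (h k : ℤ) : ℂ :=
  (1 / 2) * ∑ᶠ p : ℤ × ℤ × ℤ × ℤ,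
    if p.1 * p.2.2.2 - p.2.1 * p.2.2.1 = 1 ∧ p.1 ≠ 0 ∧ p.2.2.1 ≠ 0 ∧
        |p.2.1 + ⌊(k : ℚ) / h + 1 / 2⌋ * p.1| ≤ |p.1| ∧ |p.1| ≤ h ∧
        |p.2.2.2 + ⌊(k : ℚ) / h + 1 / 2⌋ * p.2.2.1| ≤ |p.2.2.1| ∧ |p.2.2.1| ≤ h ∧
        ((k : ℚ) / h + p.2.1 / p.1) * ((k : ℚ) / h + p.2.2.2 / p.2.2.1) < 0 then
      (Real.sign ((k : ℝ) / h + (p.2.1 : ℝ) / p.1) : ℂ) *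
        ((p.1 * k + p.2.1 * h : ℤ) : ℂ) ^ (w - n) * ((p.2.2.1 * k + p.2.2.2 * h : ℤ) : ℂ) ^ n
    else 0

/-- `E_{w,n}` for odd `n`. -/
noncomputable def EwnOdd (w n : ℕ) (h k : ℤ) : ℂ :=
  Iwn w n h k - Bbar (n + 1) ((k : ℚ) / h) / ((n : ℂ) + 1) * (h : ℂ) ^ w
    - Bbar (w - n + 1) ((k : ℚ) / h) / (((w - n : ℕ) : ℂ) + 1) * (h : ℂ) ^ w
    + ((w : ℂ) + 2) / Bnum (w + 2) * (Bnum (n + 1) / ((n : ℂ) + 1))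
      * (Bnum (w - n + 1) / (((w - n : ℕ) : ℂ) + 1)) * (h : ℂ) ^ w

/-- `S_{w,n}` for odd `n`. -/
noncomputable def SwnOdd (w n : ℕ) (h k : ℤ) : ℂ :=
  -(Bpoly (n + 1) ((k : ℂ) / h) / ((n : ℂ) + 1)) * (h : ℂ) ^ w
    + Bpoly (n + 1) ((h : ℂ) / k) / ((n : ℂ) + 1) * (k : ℂ) ^ w
    - Bpoly (w - n + 1) ((k : ℂ) / h) / (((w - n : ℕ) : ℂ) + 1) * (h : ℂ) ^ w
    + Bpoly (w - n + 1) ((h : ℂ) / k) / (((w - n : ℕ) : ℂ) + 1) * (k : ℂ) ^ w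
    + ((w : ℂ) + 2) / Bnum (w + 2) * (Bnum (n + 1) / ((n : ℂ) + 1))
      * (Bnum (w - n + 1) / (((w - n : ℕ) : ℂ) + 1)) * ((h : ℂ) ^ w - (k : ℂ) ^ w)

noncomputable def G1 (m n : ℕ) (h k : ℤ) (p : ℤ × ℤ × ℤ × ℤ) : ℂ :=
  if p.1 * p.2.2.2 - p.2.1 * p.2.2.1 = 1 ∧
      p.1 * p.2.2.1 * ((p.1 * k + p.2.1 * h) * (p.2.2.1 * k + p.2.2.2 * h)) < 0 then
    ((p.1.sign * (p.1 * k + p.2.1 * h).sign : ℤ) : ℂ) *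
        ((p.1 * k + p.2.1 * h : ℤ) : ℂ) ^ m * ((p.2.2.1 * k + p.2.2.2 * h : ℤ) : ℂ) ^ n
  else 0

noncomputable def G2 (m n : ℕ) (h k : ℤ) (p : ℤ × ℤ × ℤ × ℤ) : ℂ :=
  if p.1 * p.2.2.2 - p.2.1 * p.2.2.1 = 1 ∧
      p.2.1 * p.2.2.2 * ((p.1 * k + p.2.1 * h) * (p.2.2.1 * k + p.2.2.2 * h)) < 0 then
    ((p.2.1.sign * (p.1 * k + p.2.1 * h).sign : ℤ) : ℂ) *
        ((p.1 * k + p.2.1 * h : ℤ) : ℂ) ^ m * ((p.2.2.1 * k + p.2.2.2 * h : ℤ) : ℂ) ^ n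
  else 0

lemma key_bound {a b c d h k : ℤ} (hh : 0 < h) (hdet : a * d - b * c = 1)
    (hneg : a * c * ((a * k + b * h) * (c * k + d * h)) < 0) :
    |a| ≤ h ∧ |c| ≤ h ∧ |a * k + b * h| ≤ h ∧ |c * k + d * h| ≤ h := by
  set u := a * k + b * h with hu
  set v := c * k + d * h with hv
  have e : a * v - c * u = h := by rw [hu, hv]; linear_combination h * hdet
  have hp : (a * v) * (c * u) < 0 := by linarith [hneg, show a * c * (u * v) = (a * v) * (c * u) by ring]
  have h1 : 0 < a * v ∧ c * u < 0 := by
    rcases mul_neg_iff.1 hp with h1 | h1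
    · exact h1
    · exfalso; omega
  have e1 : |a| * |v| + |c| * |u| = h := by
    rw [← abs_mul, ← abs_mul, abs_of_pos h1.1, abs_of_neg h1.2]; linarith
  have ha : 0 < |a| := abs_pos.2 (by rintro rfl; simp at h1)
  have hc : 0 < |c| := abs_pos.2 (by rintro rfl; simp at h1)
  have hu0 : 0 < |u| := abs_pos.2 (by intro h0; rw [h0] at h1; simp at h1)
  have hv0 : 0 < |v| := abs_pos.2 (by intro h0; rw [h0] at h1; simp at h1)
  refine ⟨?_, ?_, ?_, ?_⟩ <;> nlinarith [mul_pos ha hv0, mul_pos hc hu0]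

lemma shift_bound {a b h k f : ℤ} (hh : 0 < h) (hu : |a * k + b * h| ≤ h) 
    (ha : a ≠ 0) (h1 : 2 * f * h ≤ 2 * k + h) (h2 : 2 * k + h < 2 * f * h + 2 * h) :
    |b + f * a| ≤ |a| := by
  by_contra hcon
  have hcon : |a| + 1 ≤ |b + f * a| := by omega
  have hk : 2 * |k - f * h| ≤ h := by
    rcases abs_cases (k - f * h) with ⟨e, _⟩ | ⟨e, _⟩ <;> rw [e] <;> nlinarith
  have e : (b + f * a) * h = (a * k + b * h) - a * (k - f * h) := by ring
  have e2 : |b + f * a| * h ≤ |a * k + b * h| + |a| * |k - f * h| := by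
    rw [← abs_mul a, ← abs_of_pos hh, ← abs_mul, abs_of_pos hh, e]
    exact abs_sub _ _
  have ha' : 0 < |a| := abs_pos.2 ha
  nlinarith [mul_le_mul_of_nonneg_left hk ha'.le, mul_pos ha' hh, mul_le_mul_of_nonneg_right hcon hh.le]

lemma sum_eq (m n : ℕ) {h k : ℤ} (hh : 0 < h) (p : ℤ × ℤ × ℤ × ℤ) :
    (if p.1 * p.2.2.2 - p.2.1 * p.2.2.1 = 1 ∧ p.1 ≠ 0 ∧ p.2.2.1 ≠ 0 ∧
        |p.2.1 + ⌊(k : ℚ) / h + 1 / 2⌋ * p.1| ≤ |p.1| ∧ |p.1| ≤ h ∧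
        |p.2.2.2 + ⌊(k : ℚ) / h + 1 / 2⌋ * p.2.2.1| ≤ |p.2.2.1| ∧ |p.2.2.1| ≤ h ∧
        ((k : ℚ) / h + p.2.1 / p.1) * ((k : ℚ) / h + p.2.2.2 / p.2.2.1) < 0 then
      (Real.sign ((k : ℝ) / h + (p.2.1 : ℝ) / p.1) : ℂ) *
        ((p.1 * k + p.2.1 * h : ℤ) : ℂ) ^ m * ((p.2.2.1 * k + p.2.2.2 * h : ℤ) : ℂ) ^ n
    else 0) = G1 m n h k p := by
  obtain ⟨a, b, c, d⟩ := p
  simp only [G1]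
  have hQ : (0 : ℚ) < h := by exact_mod_cast hh
  have hR : (0 : ℝ) < h := by exact_mod_cast hh
  have hprod : a ≠ 0 → c ≠ 0 → (((k : ℚ) / h + b / a) * ((k : ℚ) / h + d / c) < 0 ↔
      a * c * ((a * k + b * h) * (c * k + d * h)) < 0) := by
    intro ha hc
    have haQ : (a : ℚ) ≠ 0 := by exact_mod_cast ha
    have hcQ : (c : ℚ) ≠ 0 := by exact_mod_cast hc
    have e : ((a * c * ((a * k + b * h) * (c * k + d * h)) : ℤ) : ℚ) =
        ((k : ℚ) / h + b / a) * ((k : ℚ) / h + d / c) * (a * c * h) ^ 2 := by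
      push_cast; field_simp
    have hpos : (0 : ℚ) < (a * c * h) ^ 2 := by positivity
    rw [← Int.cast_lt (R := ℚ), e, Int.cast_zero]
    constructor
    · intro h1; exact mul_neg_of_neg_of_pos h1 hpos
    · intro h1; by_contra h2; push Not at h2
      exact absurd h1 (not_lt.2 (mul_nonneg h2 hpos.le))
  have hsign : a ≠ 0 → ((Real.sign ((k : ℝ) / h + (b : ℝ) / a) : ℝ) : ℂ) =
      ((a.sign * (a * k + b * h).sign : ℤ) : ℂ) := by
    intro ha
    have haR : (a : ℝ) ≠ 0 := by exact_mod_cast ha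
    rw [← Int.sign_mul]
    have e : ((a * (a * k + b * h) : ℤ) : ℝ) = ((k : ℝ) / h + b / a) * (a ^ 2 * h) := by
      push_cast; field_simp
    have hpos : (0 : ℝ) < a ^ 2 * h := by positivity
    rcases lt_trichotomy (a * (a * k + b * h)) 0 with h1 | h1 | h1
    · rw [Int.sign_eq_neg_one_of_neg h1]
      have : ((a * (a * k + b * h) : ℤ) : ℝ) < 0 := by exact_mod_cast h1
      rw [e] at this
      rw [Real.sign_of_neg (by by_contra h2; push Not at h2; exact absurd this (not_lt.2 (mul_nonneg h2 hpos.le)))]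
      simp
    · rw [h1] at e ⊢
      have : (k : ℝ) / h + b / a = 0 := by
        rcases mul_eq_zero.1 (e.symm.trans (by simp)) with h | h
        · exact h
        · exact absurd h hpos.ne'
      rw [this]; simp
    · rw [Int.sign_eq_one_of_pos h1]
      have : (0 : ℝ) < ((a * (a * k + b * h) : ℤ) : ℝ) := by exact_mod_cast h1
      rw [e] at this
      rw [Real.sign_of_pos (pos_of_mul_pos_left this hpos.le)]
      simp
  by_cases H : a * d - b * c = 1 ∧ a * c * ((a * k + b * h) * (c * k + d * h)) < 0
  · have ha : a ≠ 0 := by rintro rfl; simp at H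
    have hc : c ≠ 0 := by rintro rfl; simp at H
    obtain ⟨b1, b2, b3, b4⟩ := key_bound hh H.1 H.2
    set f := ⌊(k : ℚ) / h + 1 / 2⌋ with hf
    have f1 : 2 * f * h ≤ 2 * k + h := by
      have := Int.floor_le ((k : ℚ) / h + 1 / 2)
      rw [← hf] at this
      have h3 := mul_le_mul_of_nonneg_right this hQ.le
      have h4 : ((k : ℚ) / h + 1 / 2) * h = k + h / 2 := by field_simp
      rw [h4] at h3
      have : (2 * f * h : ℚ) ≤ 2 * k + h := by linarith
      exact_mod_cast this
    have f2 : 2 * k + h < 2 * f * h + 2 * h := by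
      have := Int.lt_floor_add_one ((k : ℚ) / h + 1 / 2)
      rw [← hf] at this
      have h3 := mul_lt_mul_of_pos_right this hQ
      have h4 : ((k : ℚ) / h + 1 / 2) * h = k + h / 2 := by field_simp
      rw [h4] at h3
      have : (2 * k + h : ℚ) < 2 * f * h + 2 * h := by linarith
      exact_mod_cast this
    rw [if_pos H, if_pos ⟨H.1, ha, hc, shift_bound hh b3 ha f1 f2, b1, shift_bound hh b4 hc f1 f2, b2,
      (hprod ha hc).2 H.2⟩, hsign ha]
  · rw [if_neg H, if_neg]
    rintro ⟨h1, ha, hc, -, -, -, -, h2⟩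
    exact H ⟨h1, (hprod ha hc).1 h2⟩

lemma Iwn_eq (w n : ℕ) {h k : ℤ} (hh : 0 < h) :
    Iwn w n h k = (1 / 2) * ∑ᶠ p, G1 (w - n) n h k p := by
  unfold Iwn
  congr 1
  exact finsum_congr fun p => sum_eq (w - n) n hh p

lemma G1_fin (m n : ℕ) {h k : ℤ} (hh : 0 < h) : (Function.support (G1 m n h k)).Finite := by
  set M := h + h * |k|
  apply Set.Finite.subset ((Set.finite_Icc (-M) M).prod ((Set.finite_Icc (-M) M).prod
    ((Set.finite_Icc (-M) M).prod (Set.finite_Icc (-M) M))))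
  rintro ⟨a, b, c, d⟩ hp
  simp only [G1, Function.mem_support] at hp
  by_cases H : a * d - b * c = 1 ∧ a * c * ((a * k + b * h) * (c * k + d * h)) < 0
  swap
  · rw [if_neg H] at hp; exact absurd rfl hp
  obtain ⟨b1, b2, b3, b4⟩ := key_bound hh H.1 H.2
  have key : ∀ x y : ℤ, |x| ≤ h → |x * k + y * h| ≤ h → |y| ≤ M := by
    intro x y hx hy
    have e : y * h = (x * k + y * h) - x * k := by ring
    have e2 : |y| * h ≤ |x * k + y * h| + |x| * |k| := by
      rw [← abs_mul x, ← abs_of_pos hh, ← abs_mul, abs_of_pos hh, e]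
      refine (abs_sub _ _).trans (le_of_eq ?_)
      ring_nf
    have h0 := abs_nonneg k
    have h3 := mul_le_mul_of_nonneg_right hx h0
    have h5 : |y| * h ≤ (1 + |k|) * h := by nlinarith
    have h6 : |y| ≤ 1 + |k| := le_of_mul_le_mul_right h5 hh
    simp only [M]; nlinarith
  have hM : h ≤ M := by
    have := mul_nonneg hh.le (abs_nonneg k)
    simp only [M]; linarith
  have c2 := key a b b1 b3
  have c4 := key c d b2 b4
  simp only [Set.mem_prod, Set.mem_Icc, ← abs_le]
  exact ⟨b1.trans hM, c2, b2.trans hM, c4⟩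

lemma G1_shift (m n : ℕ) (h k : ℤ) :
    ∑ᶠ p, G1 m n h (k + h) p = ∑ᶠ p, G1 m n h k p := by
  let e : ℤ × ℤ × ℤ × ℤ ≃ ℤ × ℤ × ℤ × ℤ :=
    { toFun := fun p => (p.1, p.2.1 + p.1, p.2.2.1, p.2.2.2 + p.2.2.1)
      invFun := fun p => (p.1, p.2.1 - p.1, p.2.2.1, p.2.2.2 - p.2.2.1)
      left_inv := fun p => by simp
      right_inv := fun p => by simp }
  rw [← finsum_comp_equiv e (f := G1 m n h k)]
  refine finsum_congr fun p => ?_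
  obtain ⟨a, b, c, d⟩ := p
  simp only [G1, e, Equiv.coe_fn_mk]
  have e1 : a * (k + h) + b * h = a * k + (b + a) * h := by ring
  have e2 : c * (k + h) + d * h = c * k + (d + c) * h := by ring
  have e3 : a * (d + c) - (b + a) * c = a * d - b * c := by ring
  rw [e1, e2, e3]

lemma G1_neg (m n : ℕ) (hm : Odd m) (h k : ℤ) :
    ∑ᶠ p, G1 m n h (-k) p = ∑ᶠ p, G1 m n h k p := by
  let e : ℤ × ℤ × ℤ × ℤ ≃ ℤ × ℤ × ℤ × ℤ :=
    { toFun := fun p => (p.1, -p.2.1, -p.2.2.1, p.2.2.2)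
      invFun := fun p => (p.1, -p.2.1, -p.2.2.1, p.2.2.2)
      left_inv := fun p => by simp
      right_inv := fun p => by simp }
  rw [← finsum_comp_equiv e (f := G1 m n h k)]
  refine finsum_congr fun p => ?_
  obtain ⟨a, b, c, d⟩ := p
  simp only [G1, e, Equiv.coe_fn_mk]
  have e1 : a * (-k) + b * h = -(a * k + -b * h) := by ring
  have e2 : c * (-k) + d * h = -c * k + d * h := by ring
  have e3 : a * d - -b * -c = a * d - b * c := by ring
  have e4 : a * c * (-(a * k + -b * h) * (-c * k + d * h)) =
    a * -c * ((a * k + -b * h) * (-c * k + d * h)) := by ring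
  rw [e1, e2, e3, e4, Int.sign_neg]
  congr 2
  push_cast
  rw [hm.neg_pow]
  ring

lemma G1_scale (m n : ℕ) (h k c : ℤ) (hc : 0 < c) :
    ∑ᶠ p, G1 m n (c * h) (c * k) p = (c : ℂ) ^ (m + n) * ∑ᶠ p, G1 m n h k p := by
  rw [← smul_eq_mul (_ ^ _), smul_finsum]
  refine finsum_congr fun p => ?_
  obtain ⟨a, b, g, d⟩ := p
  simp only [G1, smul_eq_mul]
  have e1 : a * (c * k) + b * (c * h) = c * (a * k + b * h) := by ring
  have e2 : g * (c * k) + d * (c * h) = c * (g * k + d * h) := by ring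
  have e4 : a * g * (c * (a * k + b * h) * (c * (g * k + d * h))) =
    c ^ 2 * (a * g * ((a * k + b * h) * (g * k + d * h))) := by ring
  have hc2 : 0 < c ^ 2 := by positivity
  have e5 : c ^ 2 * (a * g * ((a * k + b * h) * (g * k + d * h))) < 0 ↔
    a * g * ((a * k + b * h) * (g * k + d * h)) < 0 := by
    constructor
    · intro h1; by_contra h2; push Not at h2
      exact absurd h1 (not_lt.2 (mul_nonneg hc2.le h2))
    · intro h1; exact mul_neg_of_pos_of_neg hc2 h1
  rw [e1, e2, e4, Int.sign_mul, Int.sign_eq_one_of_pos hc]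
  simp only [e5]
  split_ifs
  · push_cast; rw [mul_pow, mul_pow]; ring
  · simp

lemma G1_G2 (m n : ℕ) (h k : ℤ) :
    ∑ᶠ p, G2 m n h k p = - ∑ᶠ p, G1 m n k (-h) p ∧
    ((Function.support (G1 m n k (-h))).Finite → (Function.support (G2 m n h k)).Finite) := by
  let e : ℤ × ℤ × ℤ × ℤ ≃ ℤ × ℤ × ℤ × ℤ :=
    { toFun := fun p => (-p.2.1, p.1, -p.2.2.2, p.2.2.1)
      invFun := fun p => (p.2.1, -p.1, p.2.2.2, -p.2.2.1)
      left_inv := fun p => by simp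
      right_inv := fun p => by simp }
  have key : ∀ p, G2 m n h k p = - G1 m n k (-h) (e p) := by
    rintro ⟨a, b, c, d⟩
    simp only [G1, G2, e, Equiv.coe_fn_mk]
    have e1 : -b * -h + a * k = a * k + b * h := by ring
    have e2 : -d * -h + c * k = c * k + d * h := by ring
    have e3 : -b * c - a * -d = a * d - b * c := by ring
    have e4 : -b * -d = b * d := by ring
    rw [e1, e2, e3, e4, Int.sign_neg]
    split_ifs
    · push_cast; ring
    · simp
  constructor
  · rw [← finsum_comp_equiv e (f := G1 m n k (-h)), ← finsum_neg_distrib]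
    exact finsum_congr key
  · intro hf
    refine Set.Finite.subset (hf.preimage e.injective.injOn) ?_
    intro p hp
    simp only [Set.mem_preimage, Function.mem_support] at hp ⊢
    rw [key] at hp
    simpa using hp

lemma finsum_family (F : ℤ × ℤ × ℤ × ℤ → ℂ) (P : ℤ × ℤ × ℤ × ℤ → Prop) [DecidablePred P]
    (φ : ℤ → ℤ → ℤ × ℤ × ℤ × ℤ) (N : ℕ) (g : ℕ → ℂ)
    (hinj : ∀ e e' x x', (e = 1 ∨ e = -1) → (e' = 1 ∨ e' = -1) →
      φ e x = φ e' x' → e = e' ∧ x = x')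
    (hP : ∀ e x, (e = 1 ∨ e = -1) → P (φ e x))
    (hsupp : ∀ p, P p → F p ≠ 0 → ∃ e, (e = 1 ∨ e = -1) ∧ ∃ j < N, p = φ e ((j : ℤ) + 1))
    (hval : ∀ e, (e = 1 ∨ e = -1) → ∀ j < N, F (φ e ((j : ℤ) + 1)) = g j) :
    ∑ᶠ p, (if P p then F p else 0) = 2 * ∑ j ∈ Finset.range N, g j ∧
    (Function.support (fun p => if P p then F p else 0)).Finite := by
  have hsub : Function.support (fun p => if P p then F p else 0) ⊆
      ((({1, -1} : Finset ℤ) ×ˢ Finset.range N).image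
        (fun q => φ q.1 ((q.2 : ℤ) + 1)) : Finset (ℤ × ℤ × ℤ × ℤ)) := by
    intro p hp
    simp only [Function.mem_support] at hp
    by_cases hPp : P p
    · rw [if_pos hPp] at hp
      obtain ⟨e, he, j, hj, rfl⟩ := hsupp p hPp hp
      simp only [Finset.coe_image, Set.mem_image]
      refine ⟨(e, j), ?_, rfl⟩
      simp [he, hj]
    · rw [if_neg hPp] at hp; exact absurd rfl hp
  refine ⟨?_, Set.Finite.subset (Finset.finite_toSet _) hsub⟩
  rw [finsum_eq_sum_of_support_subset _ hsub, Finset.sum_image, Finset.sum_product]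
  · rw [Finset.sum_pair (by norm_num), two_mul]
    congr 1 <;> refine Finset.sum_congr rfl fun j hj => ?_
    · rw [if_pos (hP _ _ (Or.inl rfl))]
      exact hval 1 (Or.inl rfl) j (Finset.mem_range.1 hj)
    · rw [if_pos (hP _ _ (Or.inr rfl))]
      exact hval (-1) (Or.inr rfl) j (Finset.mem_range.1 hj)
  · rintro ⟨e, j⟩ h1 ⟨e', j'⟩ h2 heq
    simp only [Finset.coe_product, Set.mem_prod, Finset.mem_coe, Finset.mem_insert,
      Finset.mem_singleton] at h1 h2
    obtain ⟨r1, r2⟩ := hinj e e' _ _ h1.1 h2.1 heq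
    have : j = j' := by omega
    rw [r1, this]

lemma unit_pairs {b c : ℤ} (h : b * c = -1) : (b = 1 ∨ b = -1) ∧ c = -b := by
  rcases Int.mul_eq_neg_one_iff_eq_one_or_neg_one.1 h with ⟨rfl, rfl⟩ | ⟨rfl, rfl⟩ <;> simp

lemma unit_pairs' {b c : ℤ} (h : b * c = 1) : (b = 1 ∨ b = -1) ∧ c = b := by
  rcases Int.mul_eq_one_iff_eq_one_or_neg_one.1 h with ⟨rfl, rfl⟩ | ⟨rfl, rfl⟩ <;> simp

lemma range_of {h k d : ℤ} {N : ℕ} (hh : 0 < h) (hk : 0 < k) (hN : k < ((N : ℤ) + 1) * h)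
    (hc : d * (d * h - k) < 0) : ∃ j < N, d = (j : ℤ) + 1 := by
  have hd : 0 < d := by
    by_contra h1
    push Not at h1
    have : 0 ≤ d * (d * h - k) := mul_nonneg_of_nonpos_of_nonpos h1 (by nlinarith)
    linarith
  have h2 : d * h < k := by
    by_contra h1
    push Not at h1
    have : 0 ≤ d * (d * h - k) := mul_nonneg hd.le (by linarith)
    linarith
  have h3 : d < (N : ℤ) + 1 := by
    by_contra h4; push Not at h4
    nlinarith
  exact ⟨(d - 1).toNat, by omega, by omega⟩

lemma G1_val {m n : ℕ} {h k a b c d : ℤ} (u v s : ℤ) (hdet : a * d - b * c = 1)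
    (hu : a * k + b * h = u) (hv : c * k + d * h = v) (hs : a.sign * u.sign = s)
    (hneg : a * c * (u * v) < 0) :
    G1 m n h k (a, b, c, d) = (s : ℂ) * (u : ℂ) ^ m * (v : ℂ) ^ n := by
  simp only [G1]
  rw [hu, hv, hs, if_pos ⟨hdet, hneg⟩]

lemma G2_val {m n : ℕ} {h k a b c d : ℤ} (u v s : ℤ) (hdet : a * d - b * c = 1)
    (hu : a * k + b * h = u) (hv : c * k + d * h = v) (hs : b.sign * u.sign = s)
    (hneg : b * d * (u * v) < 0) :
    G2 m n h k (a, b, c, d) = (s : ℂ) * (u : ℂ) ^ m * (v : ℂ) ^ n := by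
  simp only [G2]
  rw [hu, hv, hs, if_pos ⟨hdet, hneg⟩]

lemma G1_zero {m n : ℕ} {h k a b c d : ℤ}
    (hneg : a * c * ((a * k + b * h) * (c * k + d * h)) = 0) :
    G1 m n h k (a, b, c, d) = 0 := by
  simp only [G1]
  rw [if_neg]
  rintro ⟨-, h1⟩
  exact absurd hneg h1.ne

lemma G2_zero {m n : ℕ} {h k a b c d : ℤ}
    (hneg : b * d * ((a * k + b * h) * (c * k + d * h)) = 0) :
    G2 m n h k (a, b, c, d) = 0 := by
  simp only [G2]
  rw [if_neg]
  rintro ⟨-, h1⟩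
  exact absurd hneg h1.ne

lemma G1_ne {m n : ℕ} {h k a b c d : ℤ} (hne : G1 m n h k (a, b, c, d) ≠ 0) :
    a * d - b * c = 1 ∧ a * c * ((a * k + b * h) * (c * k + d * h)) < 0 := by
  by_contra H
  simp only [G1] at hne
  rw [if_neg H] at hne
  exact hne rfl

lemma G2_ne {m n : ℕ} {h k a b c d : ℤ} (hne : G2 m n h k (a, b, c, d) ≠ 0) :
    a * d - b * c = 1 ∧ b * d * ((a * k + b * h) * (c * k + d * h)) < 0 := by
  by_contra H
  simp only [G2] at hne
  rw [if_neg H] at hne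
  exact hne rfl

noncomputable def TT (m n : ℕ) (h k : ℤ) (p : ℤ × ℤ × ℤ × ℤ) : ℂ := G1 m n h k p + G2 m n h k p

lemma fam_a {m n : ℕ} (hm : Odd m) (hn : Odd n) {h k : ℤ} (hh : 0 < h) (hk : 0 < k) (N : ℕ)
    (hN1 : (N : ℤ) * h ≤ k) (hN : k < ((N : ℤ) + 1) * h) :
    ∑ᶠ p : ℤ × ℤ × ℤ × ℤ, (if p.1 = 0 then TT m n h k p else 0) =
      2 * ∑ j ∈ Finset.range N, (-((h : ℂ) ^ m * ((k : ℂ) - ((j : ℂ) + 1) * h) ^ n)) ∧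
    (Function.support (fun p : ℤ × ℤ × ℤ × ℤ => if p.1 = 0 then TT m n h k p else 0)).Finite := by
  apply finsum_family (TT m n h k) (fun p => p.1 = 0) (fun e x => (0, e, -e, e * x))
  · rintro e e' x x' (rfl | rfl) (rfl | rfl) heq <;> simp_all
  · intros; rfl
  · rintro ⟨a, b, c, d⟩ hP hF
    simp only at hP
    subst hP
    have h2 : G2 m n h k (0, b, c, d) ≠ 0 := by
      intro h3; apply hF; rw [TT, h3, G1_zero (by ring), add_zero]
    obtain ⟨h4, h5⟩ := G2_ne h2
    obtain ⟨hb, rfl⟩ := unit_pairs (b := b) (c := c) (by linarith)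
    obtain ⟨j, hj, hd⟩ : ∃ j < N, b * d = (j : ℤ) + 1 := by
      apply range_of hh hk hN
      have hbb : b * b = 1 := by rcases hb with rfl | rfl <;> rfl
      have : b * d * ((0 * k + b * h) * (-b * k + d * h)) = h * (b * d * (b * d * h - k)) + (1 - b * b) * (b * d * h * k) := by ring
      rw [this, hbb] at h5
      by_contra h6; push Not at h6
      nlinarith
    refine ⟨b, hb, j, hj, ?_⟩
    rw [← hd]
    rcases hb with rfl | rfl <;> simp
  · intro e he j hj
    have hx : (0 : ℤ) < (j : ℤ) + 1 := by positivity
    have hle : ((j : ℤ) + 1) * h ≤ k := by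
      have : ((j : ℤ) + 1) ≤ N := by exact_mod_cast hj
      nlinarith
    have hcast : ((j : ℂ) + 1) = (((j : ℤ) + 1 : ℤ) : ℂ) := by push_cast; rfl
    rw [hcast]
    generalize ((j : ℤ) + 1) = x at hx hle
    rw [TT, G1_zero (by ring), zero_add]
    rcases hle.eq_or_lt with heq | hlt
    · rw [G2_zero (by rw [← heq]; ring), ← heq]
      push_cast
      rw [sub_self, zero_pow hn.pos.ne']; simp
    · have hneg : x * (h * (x * h - k)) < 0 :=
        mul_neg_of_pos_of_neg hx (mul_neg_of_pos_of_neg hh (by linarith))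
      rcases he with rfl | rfl
      · rw [G2_val h (-(k - x * h)) 1 (by ring) (by ring) (by ring)
          (by simp [Int.sign_eq_one_of_pos hh]) (by linarith)]
        push_cast; rw [hn.neg_pow]; ring
      · rw [G2_val (-h) (k - x * h) 1 (by ring) (by ring) (by ring)
          (by simp [Int.sign_eq_one_of_pos hh]) (by linarith)]
        push_cast; rw [hm.neg_pow]; ring

lemma fam_c {m n : ℕ} (hm : Odd m) (hn : Odd n) {h k : ℤ} (hh : 0 < h) (hk : 0 < k) (N : ℕ)
    (hN1 : (N : ℤ) * h ≤ k) (hN : k < ((N : ℤ) + 1) * h) :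
    ∑ᶠ p : ℤ × ℤ × ℤ × ℤ, (if p.2.2.1 = 0 then TT m n h k p else 0) =
      2 * ∑ j ∈ Finset.range N, (-((h : ℂ) ^ n * ((k : ℂ) - ((j : ℂ) + 1) * h) ^ m)) ∧
    (Function.support (fun p : ℤ × ℤ × ℤ × ℤ => if p.2.2.1 = 0 then TT m n h k p else 0)).Finite := by
  apply finsum_family (TT m n h k) (fun p => p.2.2.1 = 0) (fun e x => (e, -(e * x), 0, e))
  · rintro e e' x x' (rfl | rfl) (rfl | rfl) heq <;> simp_all
  · intros; rfl
  · rintro ⟨a, b, c, d⟩ hP hF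
    simp only at hP
    subst hP
    have h2 : G2 m n h k (a, b, 0, d) ≠ 0 := by
      intro h3; apply hF; rw [TT, h3, G1_zero (by ring), add_zero]
    obtain ⟨h4, h5⟩ := G2_ne h2
    obtain ⟨hb, rfl⟩ := unit_pairs' (b := a) (c := d) (by linarith)
    obtain ⟨j, hj, hd⟩ : ∃ j < N, -(d * b) = (j : ℤ) + 1 := by
      apply range_of hh hk hN
      rcases hb with rfl | rfl
      · by_contra h6; push Not at h6
        nlinarith
      · by_contra h6; push Not at h6
        nlinarith
    refine ⟨d, hb, j, hj, ?_⟩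
    rw [← hd]
    rcases hb with rfl | rfl <;> simp
  · intro e he j hj
    have hx : (0 : ℤ) < (j : ℤ) + 1 := by positivity
    have hle : ((j : ℤ) + 1) * h ≤ k := by
      have : ((j : ℤ) + 1) ≤ N := by exact_mod_cast hj
      nlinarith
    have hcast : ((j : ℂ) + 1) = (((j : ℤ) + 1 : ℤ) : ℂ) := by push_cast; rfl
    rw [hcast]
    generalize ((j : ℤ) + 1) = x at hx hle
    rw [TT, G1_zero (by ring), zero_add]
    rcases hle.eq_or_lt with heq | hlt
    · rw [G2_zero (by rw [← heq]; ring), ← heq]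
      push_cast
      rw [sub_self, zero_pow hm.pos.ne']; simp
    · have hneg : x * (h * (x * h - k)) < 0 :=
        mul_neg_of_pos_of_neg hx (mul_neg_of_pos_of_neg hh (by linarith))
      have hpos : 0 < k - x * h := by linarith
      rcases he with rfl | rfl
      · rw [G2_val (k - x * h) h (-1) (by ring) (by ring) (by ring)
          (by simp [Int.sign_eq_one_of_pos hpos, Int.sign_eq_one_of_pos hx]) (by linarith)]
        push_cast; ring
      · rw [G2_val (-(k - x * h)) (-h) (-1) (by ring) (by ring) (by ring)
          (by simp [Int.sign_eq_one_of_pos hx, hlt])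
          (by linarith)]
        push_cast; rw [hm.neg_pow, hn.neg_pow]; ring

lemma fam_b {m n : ℕ} (hm : Odd m) (hn : Odd n) {h k : ℤ} (hh : 0 < h) (hk : 0 < k) (N : ℕ)
    (hN1 : (N : ℤ) * k ≤ h) (hN : h < ((N : ℤ) + 1) * k) :
    ∑ᶠ p : ℤ × ℤ × ℤ × ℤ, (if p.2.1 = 0 then TT m n h k p else 0) =
      2 * ∑ j ∈ Finset.range N, ((k : ℂ) ^ m * ((h : ℂ) - ((j : ℂ) + 1) * k) ^ n) ∧
    (Function.support (fun p : ℤ × ℤ × ℤ × ℤ => if p.2.1 = 0 then TT m n h k p else 0)).Finite := by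
  apply finsum_family (TT m n h k) (fun p => p.2.1 = 0) (fun e x => (e, 0, -(e * x), e))
  · rintro e e' x x' (rfl | rfl) (rfl | rfl) heq <;> simp_all
  · intros; rfl
  · rintro ⟨a, b, c, d⟩ hP hF
    simp only at hP
    subst hP
    have h2 : G1 m n h k (a, 0, c, d) ≠ 0 := by
      intro h3; apply hF; rw [TT, h3, G2_zero (by ring), add_zero]
    obtain ⟨h4, h5⟩ := G1_ne h2
    obtain ⟨hb, rfl⟩ := unit_pairs' (b := a) (c := d) (by linarith)
    obtain ⟨j, hj, hd⟩ : ∃ j < N, -(d * c) = (j : ℤ) + 1 := by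
      apply range_of hk hh hN
      rcases hb with rfl | rfl
      · by_contra h6; push Not at h6
        nlinarith
      · by_contra h6; push Not at h6
        nlinarith
    refine ⟨d, hb, j, hj, ?_⟩
    rw [← hd]
    rcases hb with rfl | rfl <;> simp
  · intro e he j hj
    have hx : (0 : ℤ) < (j : ℤ) + 1 := by positivity
    have hle : ((j : ℤ) + 1) * k ≤ h := by
      have : ((j : ℤ) + 1) ≤ N := by exact_mod_cast hj
      nlinarith
    have hcast : ((j : ℂ) + 1) = (((j : ℤ) + 1 : ℤ) : ℂ) := by push_cast; rfl
    rw [hcast]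
    generalize ((j : ℤ) + 1) = x at hx hle
    rw [TT, G2_zero (by ring), add_zero]
    rcases hle.eq_or_lt with heq | hlt
    · rw [G1_zero (by rw [← heq]; ring), ← heq]
      push_cast
      rw [sub_self, zero_pow hn.pos.ne']; simp
    · have hneg : x * (k * (x * k - h)) < 0 :=
        mul_neg_of_pos_of_neg hx (mul_neg_of_pos_of_neg hk (by linarith))
      rcases he with rfl | rfl
      · rw [G1_val k (h - x * k) 1 (by ring) (by ring) (by ring)
          (by simp [Int.sign_eq_one_of_pos hk]) (by linarith)]
        push_cast; ring
      · rw [G1_val (-k) (-(h - x * k)) 1 (by ring) (by ring) (by ring)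
          (by simp [Int.sign_eq_one_of_pos hk]) (by linarith)]
        push_cast; rw [hm.neg_pow, hn.neg_pow]; ring

lemma fam_d {m n : ℕ} (hm : Odd m) (hn : Odd n) {h k : ℤ} (hh : 0 < h) (hk : 0 < k) (N : ℕ)
    (hN1 : (N : ℤ) * k ≤ h) (hN : h < ((N : ℤ) + 1) * k) :
    ∑ᶠ p : ℤ × ℤ × ℤ × ℤ, (if p.2.2.2 = 0 then TT m n h k p else 0) =
      2 * ∑ j ∈ Finset.range N, ((k : ℂ) ^ n * ((h : ℂ) - ((j : ℂ) + 1) * k) ^ m) ∧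
    (Function.support (fun p : ℤ × ℤ × ℤ × ℤ => if p.2.2.2 = 0 then TT m n h k p else 0)).Finite := by
  apply finsum_family (TT m n h k) (fun p => p.2.2.2 = 0) (fun e x => (-(e * x), e, -e, 0))
  · rintro e e' x x' (rfl | rfl) (rfl | rfl) heq <;> simp_all
  · intros; rfl
  · rintro ⟨a, b, c, d⟩ hP hF
    simp only at hP
    subst hP
    have h2 : G1 m n h k (a, b, c, 0) ≠ 0 := by
      intro h3; apply hF; rw [TT, h3, G2_zero (by ring), add_zero]
    obtain ⟨h4, h5⟩ := G1_ne h2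
    obtain ⟨hb, rfl⟩ := unit_pairs (b := b) (c := c) (by linarith)
    obtain ⟨j, hj, hd⟩ : ∃ j < N, -(b * a) = (j : ℤ) + 1 := by
      apply range_of hk hh hN
      rcases hb with rfl | rfl
      · by_contra h6; push Not at h6
        nlinarith
      · by_contra h6; push Not at h6
        nlinarith
    refine ⟨b, hb, j, hj, ?_⟩
    rw [← hd]
    rcases hb with rfl | rfl <;> simp
  · intro e he j hj
    have hx : (0 : ℤ) < (j : ℤ) + 1 := by positivity
    have hle : ((j : ℤ) + 1) * k ≤ h := by
      have : ((j : ℤ) + 1) ≤ N := by exact_mod_cast hj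
      nlinarith
    have hcast : ((j : ℂ) + 1) = (((j : ℤ) + 1 : ℤ) : ℂ) := by push_cast; rfl
    rw [hcast]
    generalize ((j : ℤ) + 1) = x at hx hle
    rw [TT, G2_zero (by ring), add_zero]
    rcases hle.eq_or_lt with heq | hlt
    · rw [G1_zero (by rw [← heq]; ring), ← heq]
      push_cast
      rw [sub_self, zero_pow hm.pos.ne']; simp
    · have hneg : x * (k * (x * k - h)) < 0 :=
        mul_neg_of_pos_of_neg hx (mul_neg_of_pos_of_neg hk (by linarith))
      have hpos : 0 < h - x * k := by linarith
      rcases he with rfl | rfl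
      · rw [G1_val (h - x * k) (-k) (-1) (by ring) (by ring) (by ring)
          (by simp [Int.sign_eq_one_of_pos hpos, Int.sign_eq_one_of_pos hx]) (by linarith)]
        push_cast; rw [hn.neg_pow]; ring
      · rw [G1_val (-(h - x * k)) k (-1) (by ring) (by ring) (by ring)
          (by simp [Int.sign_eq_one_of_pos hx, hlt])
          (by linarith)]
        push_cast; rw [hm.neg_pow]; ring

lemma TT_generic {m n : ℕ} {h k : ℤ} (hh : 0 < h) (hk : 0 < k) {a b c d : ℤ}
    (ha : a ≠ 0) (hb : b ≠ 0) (hc : c ≠ 0) (hd : d ≠ 0) : TT m n h k (a, b, c, d) = 0 := by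
  by_cases hdet : a * d - b * c = 1
  swap
  · simp only [TT, G1, G2]
    rw [if_neg (fun H => hdet H.1), if_neg (fun H => hdet H.1), add_zero]
  have hbc : b * c ≠ 0 := mul_ne_zero hb hc
  have had : a * d ≠ 0 := mul_ne_zero ha hd
  have hpos : 0 < (a * d) * (b * c) := by
    have e : a * d = b * c + 1 := by linarith
    rcases lt_or_gt_of_ne hbc with h1 | h1
    · exact mul_pos_of_neg_of_neg (by omega) h1
    · exact mul_pos (by omega) h1
  rcases lt_or_gt_of_ne (mul_ne_zero ha hb) with hab | hab
  · have hiff : a * c * ((a * k + b * h) * (c * k + d * h)) < 0 ↔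
        b * d * ((a * k + b * h) * (c * k + d * h)) < 0 := by
      generalize (a * k + b * h) * (c * k + d * h) = z
      have hp : 0 < (a * c) * (b * d) := by linarith [show (a * d) * (b * c) = (a * c) * (b * d) by ring]
      rcases mul_pos_iff.1 hp with ⟨p1, p2⟩ | ⟨p1, p2⟩
      · constructor <;> intro hz
        · rcases mul_neg_iff.1 hz with ⟨_, q⟩ | ⟨q, _⟩
          · exact mul_neg_of_pos_of_neg p2 q
          · linarith
        · rcases mul_neg_iff.1 hz with ⟨_, q⟩ | ⟨q, _⟩
          · exact mul_neg_of_pos_of_neg p1 q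
          · linarith
      · constructor <;> intro hz
        · have := pos_of_mul_neg_right hz p1.le
          exact mul_neg_of_neg_of_pos p2 this
        · have := pos_of_mul_neg_right hz p2.le
          exact mul_neg_of_neg_of_pos p1 this
    have hsg : b.sign = - a.sign := by
      rcases mul_neg_iff.1 hab with ⟨p1, p2⟩ | ⟨p1, p2⟩
      · rw [Int.sign_eq_one_of_pos p1, Int.sign_eq_neg_one_of_neg p2]
      · rw [Int.sign_eq_one_of_pos p2, Int.sign_eq_neg_one_of_neg p1]; rfl
    simp only [TT, G1, G2]
    simp only [hiff, hsg]
    split_ifs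
    · push_cast; ring
    · simp
  · have hcd : 0 < c * d := by
      have : 0 < (a * b) * (c * d) := by linarith [show (a * d) * (b * c) = (a * b) * (c * d) by ring]
      exact pos_of_mul_pos_right this hab.le
    have hau : 0 < a * (a * k + b * h) := by
      nlinarith [mul_pos hab hh, mul_nonneg (sq_nonneg a) hk.le]
    have hcv : 0 < c * (c * k + d * h) := by
      nlinarith [mul_pos hcd hh, mul_nonneg (sq_nonneg c) hk.le]
    have hbu : 0 < b * (a * k + b * h) := by
      nlinarith [mul_pos hab hk, mul_nonneg (sq_nonneg b) hh.le]
    have hdv : 0 < d * (c * k + d * h) := by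
      nlinarith [mul_pos hcd hk, mul_nonneg (sq_nonneg d) hh.le]
    have q1 := mul_pos hau hcv
    have q2 := mul_pos hbu hdv
    simp only [TT, G1, G2]
    rw [if_neg, if_neg, add_zero]
    · rintro ⟨-, h1⟩; linarith
    · rintro ⟨-, h1⟩; linarith

lemma TT_decomp {m n : ℕ} {h k : ℤ} (hh : 0 < h) (hk : 0 < k) (p : ℤ × ℤ × ℤ × ℤ) :
    TT m n h k p = ((if p.1 = 0 then TT m n h k p else 0) +
      (if p.2.2.1 = 0 then TT m n h k p else 0)) +
      ((if p.2.1 = 0 then TT m n h k p else 0) + (if p.2.2.2 = 0 then TT m n h k p else 0)) := by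
  obtain ⟨a, b, c, d⟩ := p
  by_cases hdet : a * d - b * c = 1
  swap
  · have : TT m n h k (a, b, c, d) = 0 := by
      simp only [TT, G1, G2]
      rw [if_neg (fun H => hdet H.1), if_neg (fun H => hdet H.1), add_zero]
    simp [this]
  by_cases ha : a = 0
  · have hb : b ≠ 0 := by rintro rfl; simp [ha] at hdet
    have hc : c ≠ 0 := by rintro rfl; simp [ha] at hdet
    by_cases hd : d = 0
    · have : TT m n h k (a, b, c, d) = 0 := by
        rw [TT, G1_zero (by rw [ha]; ring), G2_zero (by rw [hd]; ring), add_zero]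
      simp [this]
    · simp [ha, hb, hc, hd]
  by_cases hd : d = 0
  · have hb : b ≠ 0 := by rintro rfl; simp [hd] at hdet
    have hc : c ≠ 0 := by rintro rfl; simp [hd] at hdet
    simp [ha, hb, hc, hd]
  by_cases hb : b = 0
  · by_cases hc : c = 0
    · have : TT m n h k (a, b, c, d) = 0 := by
        rw [TT, G1_zero (by rw [hc]; ring), G2_zero (by rw [hb]; ring), add_zero]
      simp [this]
    · simp [ha, hb, hc, hd]
  by_cases hc : c = 0
  · simp [ha, hb, hc, hd]
  rw [TT_generic hh hk ha hb hc hd]; simp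

lemma G_recip {m n : ℕ} (hm : Odd m) (hn : Odd n) {h k : ℤ} (hh : 0 < h) (hk : 0 < k) (N M : ℕ)
    (hN1 : (N : ℤ) * h ≤ k) (hN : k < ((N : ℤ) + 1) * h)
    (hM1 : (M : ℤ) * k ≤ h) (hM : h < ((M : ℤ) + 1) * k) :
    (1 / 2) * ∑ᶠ p, G1 m n h k p - (1 / 2) * ∑ᶠ p, G1 m n k (-h) p =
      (∑ j ∈ Finset.range N, (-((h : ℂ) ^ m * ((k : ℂ) - ((j : ℂ) + 1) * h) ^ n)) +
       ∑ j ∈ Finset.range N, (-((h : ℂ) ^ n * ((k : ℂ) - ((j : ℂ) + 1) * h) ^ m))) +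
      (∑ j ∈ Finset.range M, ((k : ℂ) ^ m * ((h : ℂ) - ((j : ℂ) + 1) * k) ^ n) +
       ∑ j ∈ Finset.range M, ((k : ℂ) ^ n * ((h : ℂ) - ((j : ℂ) + 1) * k) ^ m)) := by
  obtain ⟨g1, g2⟩ := G1_G2 m n h k
  have f2 := g2 (G1_fin m n hk)
  have f1 := G1_fin m n (k := k) hh
  have hT : ∑ᶠ p, TT m n h k p = ∑ᶠ p, G1 m n h k p + ∑ᶠ p, G2 m n h k p := by
    unfold TT
    exact finsum_add_distrib f1 f2
  obtain ⟨a1, a2⟩ := fam_a hm hn hh hk N hN1 hN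
  obtain ⟨c1, c2⟩ := fam_c hm hn hh hk N hN1 hN
  obtain ⟨b1, b2⟩ := fam_b hm hn hh hk M hM1 hM
  obtain ⟨d1, d2⟩ := fam_d hm hn hh hk M hM1 hM
  have hT2 : ∑ᶠ p, TT m n h k p = _ := finsum_congr (TT_decomp hh hk)
  rw [finsum_add_distrib ((a2.union c2).subset (Function.support_add _ _))
    ((b2.union d2).subset (Function.support_add _ _)), finsum_add_distrib a2 c2,
    finsum_add_distrib b2 d2, a1, b1, c1, d1, hT, g1] at hT2
  linear_combination (1 / 2) * hT2

lemma bern_step (m : ℕ) (x : ℚ) (N : ℕ) :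
    (Polynomial.bernoulli (m + 1)).eval x = (Polynomial.bernoulli (m + 1)).eval (x - N) +
      (m + 1) * ∑ j ∈ Finset.range N, (x - ((j : ℚ) + 1)) ^ m := by
  induction N with
  | zero => simp
  | succ N ih =>
    have := Polynomial.bernoulli_eval_one_add (m + 1) (x - ((N : ℚ) + 1))
    rw [show 1 + (x - ((N : ℚ) + 1)) = x - N by ring] at this
    rw [ih, Finset.sum_range_succ, this]
    push_cast
    ring

lemma bern_diff (m l : ℕ) {h k : ℤ} (hh : 0 < h) (N : ℕ)
    (hN1 : (N : ℤ) * h ≤ k) (hN : k < ((N : ℤ) + 1) * h) :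
    Bbar (m + 1) ((k : ℚ) / h) / ((m : ℂ) + 1) * (h : ℂ) ^ (l + m) =
    Bpoly (m + 1) ((k : ℂ) / h) / ((m : ℂ) + 1) * (h : ℂ) ^ (l + m) +
      ∑ j ∈ Finset.range N, (-((h : ℂ) ^ l * ((k : ℂ) - ((j : ℂ) + 1) * h) ^ m)) := by
  have hQ : (0 : ℚ) < h := by exact_mod_cast hh
  have hC : (h : ℂ) ≠ 0 := by exact_mod_cast hh.ne'
  have hfl : ⌊(k : ℚ) / h⌋ = (N : ℤ) := by
    rw [Int.floor_eq_iff, le_div_iff₀ hQ, div_lt_iff₀ hQ]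
    exact ⟨by exact_mod_cast hN1, by exact_mod_cast hN⟩
  have e1 : Bpoly (m + 1) ((k : ℂ) / h) =
      (((Polynomial.bernoulli (m + 1)).eval ((k : ℚ) / h) : ℚ) : ℂ) := by
    unfold Bpoly
    have := Polynomial.aeval_algebraMap_apply_eq_algebraMap_eval (A := ℂ) ((k : ℚ) / h)
      (Polynomial.bernoulli (m + 1))
    simpa using this
  have hm : (m : ℂ) + 1 ≠ 0 := by exact_mod_cast Nat.succ_ne_zero m
  have e2 : Bbar (m + 1) ((k : ℚ) / h) = (((Polynomial.bernoulli (m + 1)).eval ((k : ℚ) / h - N) : ℚ) : ℂ) := by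
    unfold Bbar; rw [hfl]; simp
  rw [e1, e2, bern_step m ((k : ℚ) / h) N]
  push_cast
  have e3 : ∑ j ∈ Finset.range N, (-((h : ℂ) ^ l * ((k : ℂ) - ((j : ℂ) + 1) * h) ^ m)) =
      -((h : ℂ) ^ (l + m) * ∑ j ∈ Finset.range N, ((k : ℂ) / h - ((j : ℂ) + 1)) ^ m) := by
    rw [Finset.mul_sum, ← Finset.sum_neg_distrib]
    refine Finset.sum_congr rfl fun j _ => ?_
    rw [pow_add, mul_assoc, ← mul_pow]
    congr 4
    field_simp
  rw [e3]
  field_simp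
  ring

lemma Bbar_shift (m : ℕ) {h k : ℤ} (hh : 0 < h) :
    Bbar m (((k + h : ℤ) : ℚ) / h) = Bbar m ((k : ℚ) / h) := by
  have hQ : (h : ℚ) ≠ 0 := by exact_mod_cast hh.ne'
  have : ((k + h : ℤ) : ℚ) / h = (k : ℚ) / h + 1 := by push_cast; field_simp
  rw [this]
  unfold Bbar
  rw [Int.floor_add_one]; push_cast
  congr 2; ring

lemma Bbar_neg (m : ℕ) (hm : Even m) (x : ℚ) : Bbar m (-x) = Bbar m x := by
  unfold Bbar
  rw [← Int.fract, ← Int.fract]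
  by_cases hx : Int.fract x = 0
  · have : Int.fract (-x) = 0 := Int.fract_neg_eq_zero.2 hx
    rw [this, hx]
  · rw [Int.fract_neg hx, Polynomial.bernoulli_eval_one_sub, hm.neg_one_pow, one_mul]

/-- For odd `n` with `0 < n < w`, `E_{w,n}` is an even weighted Dedekind symbol of
weight `w` with reciprocity law `E_{w,n}(h,k) − E_{w,n}(k,−h) = S_{w,n}(h,k)`. -/
theorem EwnOdd_isEvenDedekindSymbol (w n : ℕ) (hw : Even w) (hw0 : 0 < w)
    (hn : Odd n) (hn0 : 0 < n) (hnw : n < w) :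
    (∀ h k : ℤ, 0 < h → EwnOdd w n h (k + h) = EwnOdd w n h k) ∧
    (∀ h k c : ℤ, 0 < h → 0 < c →
      EwnOdd w n (c * h) (c * k) = (c : ℂ) ^ w * EwnOdd w n h k) ∧
    (∀ h k : ℤ, 0 < h → EwnOdd w n h (-k) = EwnOdd w n h k) ∧
    (∀ h k : ℤ, 0 < h → 0 < k →
      EwnOdd w n h k - EwnOdd w n k (-h) = SwnOdd w n h k) := by
  obtain ⟨m, rfl⟩ : ∃ m, w = m + n := ⟨w - n, by omega⟩
  have hmn : m + n - n = m := by omega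
  have hm : Odd m := by
    rcases Nat.even_or_odd m with h | h
    · exact absurd (h.add_odd hn) (Nat.not_odd_iff_even.2 hw)
    · exact h
  have hneg : ∀ h k : ℤ, 0 < h → EwnOdd (m + n) n h (-k) = EwnOdd (m + n) n h k := by
    intro h k hh
    have e : ((-k : ℤ) : ℚ) / h = -((k : ℚ) / h) := by push_cast; ring
    unfold EwnOdd
    rw [Iwn_eq _ _ hh, Iwn_eq _ _ hh, hmn, G1_neg m n hm, e, Bbar_neg _ hn.add_one,
      Bbar_neg _ hm.add_one]
  refine ⟨?_, ?_, hneg, ?_⟩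
  · intro h k hh
    unfold EwnOdd
    rw [Iwn_eq _ _ hh, Iwn_eq _ _ hh, hmn, G1_shift, Bbar_shift _ hh, Bbar_shift _ hh]
  · intro h k c hh hc
    have hQ : (c : ℚ) ≠ 0 := by exact_mod_cast hc.ne'
    have e : ((c * k : ℤ) : ℚ) / ((c * h : ℤ) : ℚ) = (k : ℚ) / h := by
      push_cast; exact mul_div_mul_left _ _ hQ
    unfold EwnOdd
    rw [Iwn_eq _ _ hh, Iwn_eq _ _ (mul_pos hc hh), hmn, G1_scale _ _ _ _ _ hc, e]
    push_cast
    rw [mul_pow]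
    ring
  · intro h k hh hk
    have ex : ∀ h k : ℤ, 0 < h → 0 < k → ∃ N : ℕ, (N : ℤ) * h ≤ k ∧ k < ((N : ℤ) + 1) * h := by
      intro h k hh hk
      refine ⟨(k / h).toNat, ?_⟩
      rw [Int.toNat_of_nonneg (Int.ediv_nonneg hk.le hh.le)]
      exact ⟨Int.ediv_mul_le _ hh.ne', Int.lt_ediv_add_one_mul_self _ hh⟩
    obtain ⟨N, hN1, hN⟩ := ex h k hh hk
    obtain ⟨M, hM1, hM⟩ := ex k h hk hh
    have R := G_recip hm hn hh hk N M hN1 hN hM1 hM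
    have b1 := bern_diff n m hh N hN1 hN
    have b2 := bern_diff m n hh N hN1 hN
    have b3 := bern_diff n m hk M hM1 hM
    have b4 := bern_diff m n hk M hM1 hM
    rw [add_comm n m] at b2 b4
    have e : ((-h : ℤ) : ℚ) / k = -((h : ℚ) / k) := by push_cast; ring
    unfold EwnOdd SwnOdd
    rw [Iwn_eq _ _ hh, Iwn_eq _ _ hk, hmn, e, Bbar_neg _ hn.add_one,
      Bbar_neg _ hm.add_one]
    simp only [Finset.sum_neg_distrib] at R b1 b2 b3 b4
    linear_combination R - b1 - b2 + b3 + b4
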